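/- arXiv:1302.5548 — 6 statements merged into one kernel-verified Lean document; each statement's English description precedes it below -/
import Mathlib

section
/- Fix σ > 0, b ∈ ℝ, λ > 0, μ ∈ ℝ and δ > 0, let m(s) := (σ²/2)s² + b·s + λ·(exp(δ²s²/2 + μs) − 1), and for x ∈ ℝ let ŝ(x) denote the unique real solution of m'(s) = x. Define Λ(x) := 2·m(ŝ(x)) / ( ŝ(x)·(ŝ(x) − 1) ) for x large enough that ŝ(x) > 1. Then Λ(x) · (log x)^{3/2} / x → δ/√2 as x → +∞; in particular, for fixed k > 0, setting x = k/T gives Λ(k/T) ∼ (δ/√2)·(k/T)·(log(k/T))^{−3/2} as T → 0⁺. -/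
open Filter Real


lemma aux_exp (μ δ : ℝ) (hδ : 0 < δ) (n : ℕ) :
    Tendsto (fun s : ℝ => s ^ n * Real.exp (-(δ ^ 2 * s ^ 2 / 2 + μ * s))) atTop (nhds 0) := by
  refine squeeze_zero' ?_ ?_ (Real.tendsto_pow_mul_exp_neg_atTop_nhds_zero n)
  · filter_upwards [eventually_ge_atTop 0] with s hs
    positivity
  · filter_upwards [eventually_ge_atTop 0, eventually_ge_atTop ((1 - μ) * 2 / δ ^ 2)] with s hs h1
    rw [div_le_iff₀ (by positivity)] at h1
    gcongr
    nlinarith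

lemma aux_main (σ b lam μ δ : ℝ) (hlam : 0 < lam) (hδ : 0 < δ) (m d : ℝ → ℝ)
    (hm : ∀ s : ℝ,
      m s = σ ^ 2 / 2 * s ^ 2 + b * s + lam * (Real.exp (δ ^ 2 * s ^ 2 / 2 + μ * s) - 1))
    (hd : ∀ s : ℝ, d s = σ ^ 2 * s + b
      + lam * ((δ ^ 2 * s + μ) * Real.exp (δ ^ 2 * s ^ 2 / 2 + μ * s))) :
    Tendsto (fun s => 2 * m s / (s * (s - 1)) * Real.log (d s) ^ ((3 : ℝ) / 2) / d s)
      atTop (nhds (δ / Real.sqrt 2)) := by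
  have e0 := aux_exp μ δ hδ 0
  have e1 := aux_exp μ δ hδ 1
  have e2 := aux_exp μ δ hδ 2
  have hinv : Tendsto (fun s : ℝ => s⁻¹) atTop (nhds 0) := tendsto_inv_atTop_zero
  have hA : Tendsto (fun s => m s * Real.exp (-(δ ^ 2 * s ^ 2 / 2 + μ * s))) atTop (nhds lam) := by
    have := (((e2.const_mul (σ ^ 2 / 2)).add (e1.const_mul b)).sub (e0.const_mul lam)).const_add lam
    simp only [mul_zero, add_zero, sub_zero] at this
    refine this.congr fun s => ?_
    rw [hm, Real.exp_neg]
    have := (Real.exp_pos (δ ^ 2 * s ^ 2 / 2 + μ * s)).ne'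
    field_simp
    ring
  have hB : Tendsto (fun s => d s * s⁻¹ * Real.exp (-(δ ^ 2 * s ^ 2 / 2 + μ * s))) atTop
      (nhds (lam * δ ^ 2)) := by
    have := ((e0.const_mul (σ ^ 2)).add ((hinv.mul e0).const_mul b)).add
      ((hinv.const_mul (lam * μ)).const_add (lam * δ ^ 2))
    simp only [mul_zero, add_zero, zero_add] at this
    refine this.congr' ?_
    filter_upwards [eventually_gt_atTop 0] with s hs
    rw [hd, Real.exp_neg]
    have := (Real.exp_pos (δ ^ 2 * s ^ 2 / 2 + μ * s)).ne'
    field_simp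
  have hpos : 0 < lam * δ ^ 2 := by positivity
  have hBpos := hB.eventually (lt_mem_nhds hpos)
  have hdpos : ∀ᶠ s in atTop, 0 < d s := by
    filter_upwards [hBpos, eventually_gt_atTop 0] with s h hs
    have h1 := pos_of_mul_pos_left h (Real.exp_pos _).le
    exact pos_of_mul_pos_left h1 (by positivity)
  have hlogs : Tendsto (fun s : ℝ => Real.log s * s⁻¹) atTop (nhds 0) := by
    simpa [div_eq_mul_inv] using Real.isLittleO_log_id_atTop.tendsto_div_nhds_zero
  have hL : Tendsto (fun s => Real.log (d s) / s ^ 2) atTop (nhds (δ ^ 2 / 2)) := by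
    have h1 := (hB.log hpos.ne').mul (hinv.mul hinv)
    have := ((h1.add (hlogs.mul hinv)).add (hinv.const_mul μ)).const_add (δ ^ 2 / 2)
    simp only [mul_zero, add_zero] at this
    refine this.congr' ?_
    filter_upwards [hdpos, eventually_gt_atTop 0] with s h hs
    rw [Real.log_mul (by positivity) (Real.exp_pos _).ne', Real.log_mul h.ne' (by positivity),
      Real.log_exp, Real.log_inv]
    field_simp
    ring
  have hP := hL.rpow_const (p := (3 : ℝ) / 2) (Or.inl (by positivity))
  have hfin := (((hA.const_mul 2).div (hinv.const_sub 1) (by norm_num)).mul hP).div hB hpos.ne'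
  have hlim : 2 * lam / (1 - 0) * (δ ^ 2 / 2) ^ ((3 : ℝ) / 2) / (lam * δ ^ 2) = δ / √2 := by
    have h2 : (δ ^ 2 / 2) ^ ((3 : ℝ) / 2) = (δ / √2) ^ 3 := by
      have : δ ^ 2 / 2 = (δ / √2) ^ (2 : ℝ) := by
        rw [Real.rpow_two, div_pow, Real.sq_sqrt (by norm_num)]
      rw [this, ← Real.rpow_mul (by positivity), ← Real.rpow_natCast]
      norm_num
    rw [h2, div_pow]
    have h3 : √2 ^ 3 = 2 * √2 := by
      rw [pow_succ, Real.sq_sqrt (by norm_num)]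
    rw [h3]
    field_simp
    ring
  rw [hlim] at hfin
  refine hfin.congr' ?_
  have hLpos := hL.eventually (lt_mem_nhds (show 0 < δ ^ 2 / 2 by positivity))
  filter_upwards [hdpos, eventually_gt_atTop 1, hLpos] with s h hs hl
  have hs0 : 0 < s := by linarith
  have hs1 : s - 1 ≠ 0 := by linarith
  have hl0 : 0 < Real.log (d s) := by
    have := mul_pos hl (show 0 < s ^ 2 by positivity)
    rwa [div_mul_cancel₀ _ (by positivity)] at this
  have h3 : (s ^ 2) ^ ((3 : ℝ) / 2) = s ^ 3 := by
    rw [← Real.rpow_natCast s 2, ← Real.rpow_mul hs0.le, ← Real.rpow_natCast]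
    norm_num
  have hE := (Real.exp_pos (-(δ ^ 2 * s ^ 2 / 2 + μ * s))).ne'
  simp only [Pi.div_apply]
  rw [Real.div_rpow hl0.le (by positivity), h3]
  have h4 : 1 - s⁻¹ = (s - 1) / s := by field_simp
  rw [h4]
  generalize Real.exp (-(δ ^ 2 * s ^ 2 / 2 + μ * s)) = E at hE
  generalize Real.log (d s) ^ ((3 : ℝ) / 2) = L
  field_simp

lemma aux_deriv (σ b lam μ δ : ℝ) (m : ℝ → ℝ)
    (hm : ∀ s : ℝ,
      m s = σ ^ 2 / 2 * s ^ 2 + b * s + lam * (Real.exp (δ ^ 2 * s ^ 2 / 2 + μ * s) - 1)) (s : ℝ) :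
    deriv m s = σ ^ 2 * s + b
      + lam * ((δ ^ 2 * s + μ) * Real.exp (δ ^ 2 * s ^ 2 / 2 + μ * s)) := by
  have hm' : m = fun s => σ ^ 2 / 2 * s ^ 2 + b * s
      + lam * (Real.exp (δ ^ 2 * s ^ 2 / 2 + μ * s) - 1) := funext hm
  rw [hm']
  have h2 : HasDerivAt (fun s : ℝ => s ^ 2) (2 * s) s := by simpa using hasDerivAt_pow 2 s
  have hq := ((h2.const_mul (δ ^ 2)).div_const 2).add ((hasDerivAt_id s).const_mul μ)
  have := ((h2.const_mul (σ ^ 2 / 2)).add ((hasDerivAt_id s).const_mul b)).add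
    ((hq.exp.sub_const 1).const_mul lam)
  refine (HasDerivAt.deriv (this.congr_deriv ?_) :)
  simp
  ring

/-- Short-time / large-strike blowup of the Merton saddle point local-variance
approximation: `Λ(x) = 2m(ŝ(x))/(ŝ(x)(ŝ(x)−1))` satisfies
`Λ(x)·(log x)^{3/2}/x → δ/√2` as `x → +∞`; in particular, for fixed `k > 0`,
`Λ(k/T) ∼ (δ/√2)·(k/T)·(log(k/T))^{−3/2}` as `T → 0⁺`. -/
theorem merton_local_vol_blowup
    (σ b lam μ δ : ℝ) (hσ : 0 < σ) (hlam : 0 < lam) (hδ : 0 < δ)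
    (m : ℝ → ℝ)
    (hm : ∀ s : ℝ,
      m s = σ ^ 2 / 2 * s ^ 2 + b * s + lam * (Real.exp (δ ^ 2 * s ^ 2 / 2 + μ * s) - 1))
    (sHat : ℝ → ℝ)
    (hsolve : ∀ x : ℝ, deriv m (sHat x) = x)
    (huniq : ∀ x s : ℝ, deriv m s = x → s = sHat x)
    (Λ : ℝ → ℝ)
    (hΛ : ∀ x : ℝ, Λ x = 2 * m (sHat x) / (sHat x * (sHat x - 1))) :
    Tendsto (fun x : ℝ => Λ x * Real.log x ^ ((3 : ℝ) / 2) / x)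
      atTop (nhds (δ / Real.sqrt 2))
    ∧ ∀ k : ℝ, 0 < k →
        Tendsto
          (fun T : ℝ =>
            Λ (k / T) / (δ / Real.sqrt 2 * (k / T) * Real.log (k / T) ^ (-(3 : ℝ) / 2)))
          (nhdsWithin 0 (Set.Ioi 0)) (nhds 1) := by
  have hd := aux_deriv σ b lam μ δ m hm
  have hmain := aux_main σ b lam μ δ hlam hδ m (deriv m) hm hd
  have hs : Tendsto sHat atTop atTop := by
    rw [tendsto_atTop]
    intro M
    set R := |M| + |μ| / δ ^ 2 with hR
    have hR0 : 0 ≤ R := by positivity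
    filter_upwards [eventually_gt_atTop (σ ^ 2 * R + b
      + lam * ((δ ^ 2 * R + |μ|) * Real.exp (δ ^ 2 * R ^ 2 / 2 + |μ| * R)))] with x hx
    by_contra! hlt
    have hx' := hsolve x
    rw [hd] at hx'
    generalize sHat x = s at *
    have hsR : s ≤ R := by
      have := le_abs_self M
      have : 0 ≤ |μ| / δ ^ 2 := by positivity
      linarith
    have h1 : σ ^ 2 * s ≤ σ ^ 2 * R := by gcongr
    have h2 : (δ ^ 2 * s + μ) * Real.exp (δ ^ 2 * s ^ 2 / 2 + μ * s)
        ≤ (δ ^ 2 * R + |μ|) * Real.exp (δ ^ 2 * R ^ 2 / 2 + |μ| * R) := by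
      rcases le_total (δ ^ 2 * s + μ) 0 with h | h
      · exact (mul_nonpos_of_nonpos_of_nonneg h (Real.exp_pos _).le).trans (by positivity)
      · have hsl : -R ≤ s := by
          have h5 : -(|μ| / δ ^ 2) ≤ s := by
            rw [← neg_div, div_le_iff₀ (by positivity)]
            have := le_abs_self μ
            linarith
          have := abs_nonneg M
          linarith
        have habs : |s| ≤ R := abs_le.2 ⟨hsl, hsR⟩
        have h6 : s ^ 2 ≤ R ^ 2 := sq_le_sq' hsl hsR
        have h7 : μ * s ≤ |μ| * R := by
          calc μ * s ≤ |μ * s| := le_abs_self _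
            _ = |μ| * |s| := abs_mul _ _
            _ ≤ _ := by gcongr
        have h8 := le_abs_self μ
        gcongr
    have h3 := mul_le_mul_of_nonneg_left h2 hlam.le
    linarith
  have key : Tendsto (fun x : ℝ => Λ x * Real.log x ^ ((3 : ℝ) / 2) / x)
      atTop (nhds (δ / Real.sqrt 2)) := by
    refine (hmain.comp hs).congr fun x => ?_
    simp only [Function.comp_apply, hsolve, hΛ]
  refine ⟨key, fun k hk => ?_⟩
  have hT : Tendsto (fun T : ℝ => k / T) (nhdsWithin 0 (Set.Ioi 0)) atTop := by
    simpa [div_eq_mul_inv] using tendsto_inv_nhdsGT_zero.const_mul_atTop hk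
  have hc : δ / Real.sqrt 2 ≠ 0 := by positivity
  have h1 := (key.div_const (δ / Real.sqrt 2))
  rw [div_self hc] at h1
  refine Tendsto.comp (g := fun x => Λ x / (δ / Real.sqrt 2 * x * Real.log x ^ (-(3 : ℝ) / 2)))
    (h1.congr' ?_) hT
  filter_upwards [eventually_gt_atTop 1] with x hx
  have hl := Real.log_pos hx
  have hp : 0 < Real.log x ^ ((3 : ℝ) / 2) := by positivity
  rw [neg_div, Real.rpow_neg hl.le]
  generalize Real.log x ^ ((3 : ℝ) / 2) = L at *
  have : x ≠ 0 := by linarith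
  field_simp
end

section
/- Fix σ > 0, λ > 0, p ∈ (0,1), λ₊ > 1 and λ₋ > 0, let m(s) := (σ²/2)s² + λ·( λ₊·p/(λ₊ − s) + λ₋·(1−p)/(λ₋ + s) ) on (−λ₋, λ₊), and for x ∈ ℝ let ŝ(x) ∈ (−λ₋, λ₊) denote the unique solution of m'(s) = x. Then (λ₊ − ŝ(x))·√x → √(λ·λ₊·p) as x → +∞; in particular ŝ(x) → λ₊ as x → +∞. -/
open Filter

/-- The Kou saddle point `ŝ(x)` (the unique solution in `(−λ₋, λ₊)` of
`m'(s) = x`) converges to the singularity `λ₊` as `x → +∞`, with rate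
`(λ₊ − ŝ(x))·√x → √(λλ₊p)`. -/
theorem kou_saddle_point_asymptotics
    (σ lam p lamP lamM : ℝ)
    (hσ : 0 < σ) (hlam : 0 < lam) (hp0 : 0 < p) (hp1 : p < 1)
    (hlamP : 1 < lamP) (hlamM : 0 < lamM)
    (m : ℝ → ℝ)
    (hm : ∀ s ∈ Set.Ioo (-lamM) lamP,
      m s = σ ^ 2 / 2 * s ^ 2 + lam * (lamP * p / (lamP - s) + lamM * (1 - p) / (lamM + s)))
    (sHat : ℝ → ℝ)
    (hmem : ∀ x : ℝ, sHat x ∈ Set.Ioo (-lamM) lamP)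
    (hsolve : ∀ x : ℝ, deriv m (sHat x) = x)
    (huniq : ∀ x s : ℝ, s ∈ Set.Ioo (-lamM) lamP → deriv m s = x → s = sHat x) :
    Tendsto (fun x : ℝ => (lamP - sHat x) * Real.sqrt x)
        atTop (nhds (Real.sqrt (lam * lamP * p)))
    ∧ Tendsto sHat atTop (nhds lamP) := by
  have hA : 0 < lam * lamP * p := by positivity
  have key : ∀ x, σ ^ 2 * sHat x + lam * lamP * p / (lamP - sHat x) ^ 2
      - lam * (lamM * (1 - p)) / (lamM + sHat x) ^ 2 = x := by
    intro x
    obtain ⟨h1, h2⟩ := hmem x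
    have hu : lamP - sHat x ≠ 0 := by linarith
    have hv : lamM + sHat x ≠ 0 := by linarith
    have e : m =ᶠ[nhds (sHat x)] fun s => σ ^ 2 / 2 * s ^ 2
        + lam * (lamP * p / (lamP - s) + lamM * (1 - p) / (lamM + s)) := by
      filter_upwards [Ioo_mem_nhds h1 h2] with s hs using hm s hs
    have d1 : HasDerivAt (fun s : ℝ => lamP - s) (-1) (sHat x) := by
      simpa using (hasDerivAt_id (sHat x)).const_sub lamP
    have d2 : HasDerivAt (fun s : ℝ => lamM + s) 1 (sHat x) := by
      simpa using (hasDerivAt_id (sHat x)).const_add lamM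
    have d3 := (((hasDerivAt_id (sHat x)).pow 2).const_mul (σ ^ 2 / 2)).add
      ((((hasDerivAt_const (sHat x) (lamP * p)).div d1 hu).add
        ((hasDerivAt_const (sHat x) (lamM * (1 - p))).div d2 hv)).const_mul lam)
    have d4 := (d3.congr_of_eventuallyEq e).deriv
    rw [hsolve x] at d4
    refine Eq.trans ?_ d4.symm
    simp only [id, Nat.cast_ofNat]
    field_simp
    ring
  have hu2 : Tendsto (fun x => (lamP - sHat x) ^ 2) atTop (nhds 0) := by
    have hlim : Tendsto (fun x : ℝ => lam * lamP * p / (x - σ ^ 2 * lamP)) atTop (nhds 0) :=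
      Tendsto.const_div_atTop (tendsto_atTop_add_const_right _ (-(σ ^ 2 * lamP)) tendsto_id) _
    refine squeeze_zero' (Eventually.of_forall fun x => sq_nonneg _) ?_ hlim
    filter_upwards [eventually_gt_atTop (σ ^ 2 * lamP)] with x hx
    obtain ⟨h1, h2⟩ := hmem x
    have hu : 0 < (lamP - sHat x) ^ 2 := pow_pos (by linarith) 2
    have hv : 0 ≤ lam * (lamM * (1 - p)) / (lamM + sHat x) ^ 2 := by
      have : 0 < 1 - p := by linarith
      positivity
    have hs : σ ^ 2 * sHat x ≤ σ ^ 2 * lamP := by gcongr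
    have hk := key x
    rw [le_div_iff₀ (by linarith), mul_comm, ← le_div_iff₀ hu]
    linarith
  have hu1 : Tendsto (fun x => lamP - sHat x) atTop (nhds 0) := by
    have h := (Real.continuous_sqrt.tendsto 0).comp hu2
    rw [Real.sqrt_zero] at h
    refine h.congr fun x => ?_
    exact Real.sqrt_sq (by linarith [(hmem x).2])
  have hs : Tendsto sHat atTop (nhds lamP) := by
    have h := hu1.const_sub lamP
    simpa using h
  refine ⟨?_, hs⟩
  have hlim : Tendsto (fun x => lam * lamP * p + (lamP - sHat x) ^ 2 *
      (σ ^ 2 * sHat x - lam * (lamM * (1 - p)) / (lamM + sHat x) ^ 2)) atTop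
      (nhds (lam * lamP * p)) := by
    have hne : (lamM + lamP) ^ 2 ≠ 0 := by positivity
    have h := (hu2.mul ((hs.const_mul (σ ^ 2)).sub
      ((tendsto_const_nhds (x := lam * (lamM * (1 - p)))).div
        ((hs.const_add lamM).pow 2) hne))).const_add (lam * lamP * p)
    simpa using h
  refine ((Real.continuous_sqrt.tendsto _).comp hlim).congr fun x => ?_
  have hu : 0 < lamP - sHat x := by linarith [(hmem x).2]
  have e : lam * lamP * p + (lamP - sHat x) ^ 2 *
      (σ ^ 2 * sHat x - lam * (lamM * (1 - p)) / (lamM + sHat x) ^ 2)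
      = (lamP - sHat x) ^ 2 * x := by
    have h3 : lam * lamP * p = (lamP - sHat x) ^ 2 * (lam * lamP * p / (lamP - sHat x) ^ 2) := by
      field_simp
    linear_combination h3 + (lamP - sHat x) ^ 2 * key x
  simp only [Function.comp]
  rw [e, Real.sqrt_mul (sq_nonneg _), Real.sqrt_sq hu.le]
end

section
/- Fix σ > 0, λ > 0, p ∈ (0,1), λ₊ > 1 and λ₋ > 0, let m(s) := (σ²/2)s² + λ·( λ₊·p/(λ₊ − s) + λ₋·(1−p)/(λ₋ + s) ) on (−λ₋, λ₊), and for x ∈ ℝ let ŝ(x) ∈ (−λ₋, λ₊) denote the unique solution of m'(s) = x. Define Λ(x) := 2·m(ŝ(x)) / ( ŝ(x)·(ŝ(x) − 1) ) for x large enough that ŝ(x) > 1. Then there exists a constant c > 0 (namely c = 2√(λ·λ₊·p)/(λ₊·(λ₊ − 1))) such that Λ(x)/√x → c as x → +∞; in particular, for fixed k > 0, Λ(k/T) is of order T^{−1/2} as T → 0⁺. -/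
open Filter

/-- Short-time blowup of order `T^{−1/2}` in the Kou model:
`Λ(x) = 2m(ŝ(x))/(ŝ(x)(ŝ(x)−1))` satisfies `Λ(x)/√x → c` as `x → +∞` with
`c = 2√(λλ₊p)/(λ₊(λ₊−1)) > 0`; in particular, for fixed `k > 0`,
`√T·Λ(k/T) → c·√k` as `T → 0⁺`. -/
theorem kou_local_vol_blowup
    (σ lam p lamP lamM : ℝ)
    (hσ : 0 < σ) (hlam : 0 < lam) (hp0 : 0 < p) (hp1 : p < 1)
    (hlamP : 1 < lamP) (hlamM : 0 < lamM)
    (m : ℝ → ℝ)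
    (hm : ∀ s ∈ Set.Ioo (-lamM) lamP,
      m s = σ ^ 2 / 2 * s ^ 2 + lam * (lamP * p / (lamP - s) + lamM * (1 - p) / (lamM + s)))
    (sHat : ℝ → ℝ)
    (hmem : ∀ x : ℝ, sHat x ∈ Set.Ioo (-lamM) lamP)
    (hsolve : ∀ x : ℝ, deriv m (sHat x) = x)
    (huniq : ∀ x s : ℝ, s ∈ Set.Ioo (-lamM) lamP → deriv m s = x → s = sHat x)
    (Λ : ℝ → ℝ)
    (hΛ : ∀ x : ℝ, Λ x = 2 * m (sHat x) / (sHat x * (sHat x - 1))) :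
    ∃ c : ℝ, 0 < c ∧ c = 2 * Real.sqrt (lam * lamP * p) / (lamP * (lamP - 1))
      ∧ Tendsto (fun x : ℝ => Λ x / Real.sqrt x) atTop (nhds c)
      ∧ ∀ k : ℝ, 0 < k →
          Tendsto (fun T : ℝ => Real.sqrt T * Λ (k / T))
            (nhdsWithin 0 (Set.Ioi 0)) (nhds (c * Real.sqrt k)) := by
  have hA : 0 < lam * lamP * p := by positivity
  have hder : ∀ s ∈ Set.Ioo (-lamM) lamP, deriv m s =
      σ ^ 2 * s + lam * lamP * p / (lamP - s) ^ 2 - lam * lamM * (1 - p) / (lamM + s) ^ 2 := by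
    intro s hs
    have h1 : lamP - s ≠ 0 := by have := hs.2; linarith
    have h2 : lamM + s ≠ 0 := by have := hs.1; linarith
    have hev : m =ᶠ[nhds s] fun s => σ ^ 2 / 2 * s ^ 2 +
        lam * (lamP * p / (lamP - s) + lamM * (1 - p) / (lamM + s)) := by
      filter_upwards [isOpen_Ioo.mem_nhds hs] with t ht using hm t ht
    rw [hev.deriv_eq]
    have e1 : HasDerivAt (fun s : ℝ => lamP - s) (-1) s := by
      simpa using (hasDerivAt_id s).const_sub lamP
    have e2 : HasDerivAt (fun s : ℝ => lamM + s) 1 s := by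
      simpa using (hasDerivAt_id s).const_add lamM
    have e3 := (hasDerivAt_const s (lamP * p)).fun_div e1 h1
    have e4 := (hasDerivAt_const s (lamM * (1 - p))).fun_div e2 h2
    have e5 := ((hasDerivAt_pow 2 s).const_mul (σ ^ 2 / 2)).fun_add
      ((e3.fun_add e4).const_mul lam)
    rw [e5.deriv]
    push_cast
    field_simp
    ring
  have hdpos : ∀ x, 0 < lamP - sHat x := fun x => by have := (hmem x).2; linarith
  have hepos : ∀ x, 0 < lamM + sHat x := fun x => by have := (hmem x).1; linarith
  have heq : ∀ x, x = σ ^ 2 * sHat x + lam * lamP * p / (lamP - sHat x) ^ 2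
      - lam * lamM * (1 - p) / (lamM + sHat x) ^ 2 := fun x => by
    rw [← hder _ (hmem x), hsolve]
  have hd2 : Tendsto (fun x => (lamP - sHat x) ^ 2) atTop (nhds 0) := by
    have hb : Tendsto (fun x : ℝ => lam * lamP * p / (x - σ ^ 2 * lamP)) atTop (nhds 0) :=
      Tendsto.const_div_atTop (tendsto_atTop_add_const_right _ _ tendsto_id) _
    refine squeeze_zero' (Eventually.of_forall fun x => sq_nonneg _) ?_ hb
    filter_upwards [eventually_gt_atTop (σ ^ 2 * lamP)] with x hx
    have h1 := heq x
    have h2 : 0 ≤ lam * lamM * (1 - p) / (lamM + sHat x) ^ 2 := by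
      have : 0 < 1 - p := by linarith
      positivity
    have h3 : σ ^ 2 * sHat x ≤ σ ^ 2 * lamP :=
      mul_le_mul_of_nonneg_left (hmem x).2.le (sq_nonneg _)
    have h4 : x - σ ^ 2 * lamP ≤ lam * lamP * p / (lamP - sHat x) ^ 2 := by linarith
    have h5 : 0 < (lamP - sHat x) ^ 2 := pow_pos (hdpos x) 2
    rw [le_div_iff₀ h5] at h4
    rw [le_div_iff₀ (by linarith)]
    linarith
  have hd : Tendsto (fun x => lamP - sHat x) atTop (nhds 0) := by
    have := hd2.sqrt
    simp only [Real.sqrt_zero] at this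
    exact this.congr fun x => Real.sqrt_sq (hdpos x).le
  have hs : Tendsto sHat atTop (nhds lamP) := by
    have := hd.const_sub lamP
    simpa using this
  have hMP : lamM + lamP ≠ 0 := by linarith
  have he : Tendsto (fun x => lamM + sHat x) atTop (nhds (lamM + lamP)) := hs.const_add _
  have hxd : Tendsto (fun x => x * (lamP - sHat x) ^ 2) atTop (nhds (lam * lamP * p)) := by
    have h := (((hs.const_mul (σ ^ 2)).mul hd2).add_const (lam * lamP * p)).sub
      ((hd2.const_mul (lam * lamM * (1 - p))).div (he.pow 2) (pow_ne_zero 2 hMP))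
    have h' : σ ^ 2 * lamP * 0 + lam * lamP * p - lam * lamM * (1 - p) * 0 / (lamM + lamP) ^ 2
      = lam * lamP * p := by simp
    rw [h'] at h
    refine h.congr fun x => ?_
    have h1 := (hdpos x).ne'
    have h2 := (hepos x).ne'
    refine Eq.trans ?_ (congrArg (· * (lamP - sHat x) ^ 2) (heq x).symm)
    simp only [Pi.div_apply]
    field_simp
  have hsx : Tendsto (fun x => Real.sqrt x * (lamP - sHat x)) atTop
      (nhds (Real.sqrt (lam * lamP * p))) := by
    refine hxd.sqrt.congr fun x => ?_
    rw [Real.sqrt_mul' _ (sq_nonneg _), Real.sqrt_sq (hdpos x).le]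
  have hmd : Tendsto (fun x => m (sHat x) * (lamP - sHat x)) atTop (nhds (lam * lamP * p)) := by
    have h := (((hs.pow 2).const_mul (σ ^ 2 / 2)).mul hd).add
      ((((hd.const_mul (lamM * (1 - p))).div he hMP).const_add (lamP * p)).const_mul lam)
    have h' : σ ^ 2 / 2 * lamP ^ 2 * 0 + lam * (lamP * p + lamM * (1 - p) * 0 / (lamM + lamP))
      = lam * lamP * p := by simp; ring
    rw [h'] at h
    refine h.congr fun x => ?_
    have h1 := (hdpos x).ne'
    have h2 := (hepos x).ne'
    rw [hm _ (hmem x)]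
    simp only [Pi.div_apply]
    field_simp
  have hsA : 0 < Real.sqrt (lam * lamP * p) := Real.sqrt_pos.2 hA
  have hden : 0 < lamP * (lamP - 1) := mul_pos (by linarith) (by linarith)
  have hmain : Tendsto (fun x : ℝ => Λ x / Real.sqrt x) atTop
      (nhds (2 * Real.sqrt (lam * lamP * p) / (lamP * (lamP - 1)))) := by
    have h := ((hmd.div hsx hsA.ne').const_mul 2).div (hs.mul (hs.sub_const 1)) hden.ne'
    rw [Real.div_sqrt] at h
    refine h.congr fun x => ?_
    simp only [Pi.div_apply]
    rw [hΛ, mul_div_mul_right _ _ (hdpos x).ne', div_right_comm, ← mul_div_assoc]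
  refine ⟨_, by positivity, rfl, hmain, ?_⟩
  intro k hk
  have hT : Tendsto (fun T : ℝ => k / T) (nhdsWithin 0 (Set.Ioi 0)) atTop := by
    simpa [div_eq_mul_inv] using tendsto_inv_nhdsGT_zero.const_mul_atTop hk
  refine ((hmain.comp hT).mul_const (Real.sqrt k)).congr' ?_
  filter_upwards [self_mem_nhdsWithin] with T hT0
  have hT0' : 0 < T := hT0
  have h1 := (Real.sqrt_pos.2 hT0').ne'
  have h2 := (Real.sqrt_pos.2 hk).ne'
  simp only [Function.comp]
  rw [Real.sqrt_div hk.le]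
  field_simp
end

section
/- Fix σ > 0 and λ > 0, let Φ and φ denote the standard normal cumulative distribution function and density, and for K, T > 0 set d₂(K,T) := ( log(1/K) + (λ − σ²/2)T ) / (σ√T), d₁(K,T) := d₂(K,T) + σ√T, and C(K,T) := Φ(d₁(K,T)) − K·e^{−λT}·Φ(d₂(K,T)). Then C is smooth on (0,∞) × (0,∞) with ∂_KK C(K,T) > 0, and Dupire's local variance satisfies the exact identity 2·∂_T C(K,T) / ( K²·∂_KK C(K,T) ) = σ² + 2λσ√T · Φ(d₂(K,T)) / φ(d₂(K,T)) for all K, T > 0. -/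
theorem jtr_hasDerivAt (Φ φ : ℝ → ℝ)
    (hΦ : ∀ x : ℝ, Φ x = ∫ t in Set.Iic x, Real.exp (-t ^ 2 / 2) / Real.sqrt (2 * Real.pi))
    (hφ : ∀ x : ℝ, φ x = Real.exp (-x ^ 2 / 2) / Real.sqrt (2 * Real.pi)) (x : ℝ) :
    HasDerivAt Φ (φ x) x := by
  have hcont : Continuous φ := by
    rw [funext hφ]; fun_prop
  have hint : MeasureTheory.Integrable φ := by
    rw [funext hφ]
    have h := (integrable_exp_neg_mul_sq (b := 1 / 2) (by norm_num)).div_const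
      (Real.sqrt (2 * Real.pi))
    refine h.congr (Filter.Eventually.of_forall fun t => ?_)
    simp only
    congr 2
    ring
  have hΦ' : ∀ y, Φ y = Φ 0 + ∫ t in (0:ℝ)..y, φ t := by
    intro y
    rw [← intervalIntegral.integral_Iic_sub_Iic hint.integrableOn hint.integrableOn]
    simp only [hΦ, hφ]
    ring
  rw [funext hΦ']
  exact (intervalIntegral.integral_hasDerivAt_right (hcont.intervalIntegrable _ _)
    (hcont.stronglyMeasurableAtFilter _ _) hcont.continuousAt).const_add _

/-- Dupire local variance of Merton's jump-to-ruin model: the call surface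
`C(K,T) = Φ(d₁(K,T)) − K·e^{−λT}·Φ(d₂(K,T))` is smooth on `(0,∞) × (0,∞)` with
`∂_KK C > 0`, and `2∂_T C/(K²∂_KK C) = σ² + 2λσ√T·Φ(d₂)/φ(d₂)`. -/
theorem jump_to_ruin_dupire_identity
    (σ lam : ℝ) (hσ : 0 < σ) (hlam : 0 < lam)
    (Φ φ : ℝ → ℝ)
    (hΦ : ∀ x : ℝ, Φ x = ∫ t in Set.Iic x, Real.exp (-t ^ 2 / 2) / Real.sqrt (2 * Real.pi))
    (hφ : ∀ x : ℝ, φ x = Real.exp (-x ^ 2 / 2) / Real.sqrt (2 * Real.pi))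
    (d₂ d₁ : ℝ → ℝ → ℝ)
    (hd₂ : ∀ K T : ℝ,
      d₂ K T = (Real.log (1 / K) + (lam - σ ^ 2 / 2) * T) / (σ * Real.sqrt T))
    (hd₁ : ∀ K T : ℝ, d₁ K T = d₂ K T + σ * Real.sqrt T)
    (C : ℝ → ℝ → ℝ)
    (hC : ∀ K T : ℝ, C K T = Φ (d₁ K T) - K * Real.exp (-lam * T) * Φ (d₂ K T)) :
    ContDiffOn ℝ (⊤ : ℕ∞) (fun q : ℝ × ℝ => C q.1 q.2) (Set.Ioi 0 ×ˢ Set.Ioi 0)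
    ∧ ∀ K T : ℝ, 0 < K → 0 < T →
        0 < deriv (deriv (fun k => C k T)) K
        ∧ 2 * deriv (fun t => C K t) T / (K ^ 2 * deriv (deriv (fun k => C k T)) K)
            = σ ^ 2 + 2 * lam * σ * Real.sqrt T * Φ (d₂ K T) / φ (d₂ K T) := by
  have hΦd := jtr_hasDerivAt Φ φ hΦ hφ
  have hφs : ContDiff ℝ (⊤ : ℕ∞) φ := by
    rw [funext hφ]; fun_prop
  have hΦs : ContDiff ℝ (⊤ : ℕ∞) Φ := by
    rw [contDiff_infty_iff_deriv]
    refine ⟨fun x => (hΦd x).differentiableAt, ?_⟩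
    rw [funext fun x => (hΦd x).deriv]
    exact hφs
  have hφpos : ∀ x, 0 < φ x := by
    intro x; rw [hφ]; positivity
  have key : ∀ K T : ℝ, 0 < K → 0 < T →
      φ (d₁ K T) = K * Real.exp (-lam * T) * φ (d₂ K T) := by
    intro K T hK hT
    have hs : 0 < Real.sqrt T := Real.sqrt_pos.2 hT
    have h1 : d₂ K T * (σ * Real.sqrt T) = -Real.log K + (lam - σ ^ 2 / 2) * T := by
      rw [hd₂, one_div, Real.log_inv]
      field_simp
    have h2 : -(d₁ K T) ^ 2 / 2 = Real.log K + (-lam * T) + (-(d₂ K T) ^ 2 / 2) := by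
      rw [hd₁]
      have := Real.sq_sqrt hT.le
      linear_combination (-1 : ℝ) * h1 - σ ^ 2 / 2 * this
    rw [hφ, hφ, h2, Real.exp_add, Real.exp_add, Real.exp_log hK]
    ring
  have dK : ∀ K T : ℝ, 0 < K → 0 < T →
      HasDerivAt (fun k => d₂ k T) (-(1 / (K * (σ * Real.sqrt T)))) K := by
    intro K T hK hT
    have hs : 0 < Real.sqrt T := Real.sqrt_pos.2 hT
    simp only [hd₂, one_div, Real.log_inv]
    have h := (((Real.hasDerivAt_log hK.ne').neg).add_const ((lam - σ ^ 2 / 2) * T)).div_const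
      (σ * Real.sqrt T)
    refine h.congr_deriv ?_
    field_simp
  have cK : ∀ K T : ℝ, 0 < K → 0 < T →
      HasDerivAt (fun k => C k T) (-(Real.exp (-lam * T) * Φ (d₂ K T))) K := by
    intro K T hK hT
    have hs : 0 < Real.sqrt T := Real.sqrt_pos.2 hT
    simp only [hC]
    have hd := dK K T hK hT
    have hd1 : HasDerivAt (fun k => d₁ k T) (-(1 / (K * (σ * Real.sqrt T)))) K := by
      simp only [hd₁]
      exact hd.add_const _
    have h1 := HasDerivAt.comp K (hΦd (d₁ K T)) hd1
    have h2 := HasDerivAt.comp K (hΦd (d₂ K T)) hd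
    have h3 := h1.sub (((hasDerivAt_id K).mul_const (Real.exp (-lam * T))).mul h2)
    refine h3.congr_deriv ?_
    rw [key K T hK hT]
    simp only [id, Function.comp]
    ring
  have cKK : ∀ K T : ℝ, 0 < K → 0 < T →
      deriv (deriv (fun k => C k T)) K
        = Real.exp (-lam * T) * φ (d₂ K T) / (K * (σ * Real.sqrt T)) := by
    intro K T hK hT
    have he : deriv (fun k => C k T) =ᶠ[nhds K]
        fun k => -(Real.exp (-lam * T) * Φ (d₂ k T)) := by
      filter_upwards [lt_mem_nhds hK] with k hk
      exact (cK k T hk hT).deriv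
    rw [he.deriv_eq]
    have h2 := HasDerivAt.comp K (hΦd (d₂ K T)) (dK K T hK hT)
    have h3 := (h2.const_mul (Real.exp (-lam * T))).neg
    refine (h3.congr_deriv ?_).deriv
    ring
  have cT : ∀ K T : ℝ, 0 < K → 0 < T →
      deriv (fun t => C K t) T
        = K * Real.exp (-lam * T) * (σ / (2 * Real.sqrt T) * φ (d₂ K T) + lam * Φ (d₂ K T)) := by
    intro K T hK hT
    have hs : 0 < Real.sqrt T := Real.sqrt_pos.2 hT
    have hsq := (Real.hasDerivAt_sqrt hT.ne').const_mul σ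
    obtain ⟨D, hD⟩ : ∃ D, HasDerivAt (fun t => d₂ K t) D T := by
      simp only [hd₂]
      exact ⟨_, (((hasDerivAt_id T).const_mul (lam - σ ^ 2 / 2)).const_add
        (Real.log (1 / K))).div hsq (by positivity)⟩
    have hd1 : HasDerivAt (fun t => d₁ K t) (D + σ * (1 / (2 * Real.sqrt T))) T := by
      simp only [hd₁]
      exact hD.add hsq
    have h1 := HasDerivAt.comp T (hΦd (d₁ K T)) hd1
    have h2 := HasDerivAt.comp T (hΦd (d₂ K T)) hD
    have he := (((hasDerivAt_id T).const_mul (-lam)).exp).const_mul K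
    have h3 := h1.sub (he.mul h2)
    simp only [hC]
    refine (h3.congr_deriv ?_).deriv
    rw [key K T hK hT]
    simp only [id, Function.comp]
    ring
  refine ⟨?_, ?_⟩
  · have hd2s : ContDiffOn ℝ (⊤ : ℕ∞) (fun q : ℝ × ℝ => d₂ q.1 q.2)
        (Set.Ioi 0 ×ˢ Set.Ioi 0) := by
      rintro ⟨K, T⟩ ⟨hK, hT⟩
      simp only [Set.mem_Ioi] at hK hT
      have hs : 0 < Real.sqrt T := Real.sqrt_pos.2 hT
      simp only [hd₂, one_div, Real.log_inv]
      refine ContDiffAt.contDiffWithinAt ?_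
      refine ContDiffAt.div ?_ ?_ (by positivity)
      · exact ((contDiffAt_fst.log hK.ne').neg).add (contDiffAt_const.mul contDiffAt_snd)
      · exact contDiffAt_const.mul (contDiffAt_snd.sqrt hT.ne')
    have hd1s : ContDiffOn ℝ (⊤ : ℕ∞) (fun q : ℝ × ℝ => d₁ q.1 q.2)
        (Set.Ioi 0 ×ˢ Set.Ioi 0) := by
      simp only [hd₁]
      refine hd2s.add ?_
      rintro ⟨K, T⟩ ⟨hK, hT⟩
      simp only [Set.mem_Ioi] at hK hT
      exact (contDiffAt_const.mul (contDiffAt_snd.sqrt hT.ne')).contDiffWithinAt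
    simp only [hC]
    refine (hΦs.comp_contDiffOn hd1s).sub (ContDiffOn.mul ?_ (hΦs.comp_contDiffOn hd2s))
    exact ContDiff.contDiffOn (by fun_prop)
  · intro K T hK hT
    have hs : 0 < Real.sqrt T := Real.sqrt_pos.2 hT
    have hp := hφpos (d₂ K T)
    rw [cKK K T hK hT, cT K T hK hT]
    refine ⟨by positivity, ?_⟩
    have he := Real.exp_pos (-lam * T)
    generalize Real.exp (-lam * T) = e at *
    generalize φ (d₂ K T) = p at *
    field_simp
end

section
/- Fix σ > 0 and λ > 0, let Φ and φ denote the standard normal cumulative distribution function and density, and for K, T > 0 set d₂(K,T) := ( log(1/K) + (λ − σ²/2)T ) / (σ√T) and σ²_loc(K,T) := σ² + 2λσ√T · Φ(d₂(K,T)) / φ(d₂(K,T)). Then for every fixed K > 1, σ²_loc(K,T) → σ² as T → 0⁺. -/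
open Filter

lemma mills_bound (x : ℝ) (hx : x ≤ -1) :
    (∫ t in Set.Iic x, Real.exp (-t ^ 2 / 2) / Real.sqrt (2 * Real.pi))
      ≤ Real.exp (-x ^ 2 / 2) / Real.sqrt (2 * Real.pi) := by
  have h1 : (∫ t in Set.Iic x, Real.exp (-t ^ 2 / 2) / Real.sqrt (2 * Real.pi))
      ≤ ∫ t in Set.Iic x,
        (Real.exp (-x ^ 2 / 2) / Real.sqrt (2 * Real.pi) * Real.exp (-x)) * Real.exp t := by
    apply MeasureTheory.integral_mono_of_nonneg
    · exact Filter.Eventually.of_forall fun t => by dsimp; positivity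
    · exact (integrableOn_exp_Iic x).const_mul _
    · refine (MeasureTheory.ae_restrict_iff' measurableSet_Iic).2
        (Filter.Eventually.of_forall fun t ht => ?_)
      have ht' : t ≤ x := ht
      have e : Real.exp (-x ^ 2 / 2) / Real.sqrt (2 * Real.pi) * Real.exp (-x) * Real.exp t
          = Real.exp (-x ^ 2 / 2 + -x + t) / Real.sqrt (2 * Real.pi) := by
        rw [Real.exp_add, Real.exp_add]; ring
      dsimp only
      rw [e]
      gcongr
      nlinarith [mul_nonneg (sub_nonneg.2 ht') (sub_nonneg.2 hx), sq_nonneg (t - x)]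
  refine h1.trans (le_of_eq ?_)
  rw [MeasureTheory.integral_const_mul, integral_exp_Iic, mul_assoc, ← Real.exp_add]
  simp

/-- Out of the money (`K > 1`), the jump-to-ruin local variance
`σ²_loc(K,T) = σ² + 2λσ√T·Φ(d₂(K,T))/φ(d₂(K,T))` converges to `σ²` as `T → 0⁺`. -/
theorem jump_to_ruin_local_vol_otm_limit
    (σ lam : ℝ) (hσ : 0 < σ) (hlam : 0 < lam)
    (Φ φ : ℝ → ℝ)
    (hΦ : ∀ x : ℝ, Φ x = ∫ t in Set.Iic x, Real.exp (-t ^ 2 / 2) / Real.sqrt (2 * Real.pi))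
    (hφ : ∀ x : ℝ, φ x = Real.exp (-x ^ 2 / 2) / Real.sqrt (2 * Real.pi))
    (d₂ : ℝ → ℝ → ℝ)
    (hd₂ : ∀ K T : ℝ,
      d₂ K T = (Real.log (1 / K) + (lam - σ ^ 2 / 2) * T) / (σ * Real.sqrt T))
    (σloc2 : ℝ → ℝ → ℝ)
    (hσloc2 : ∀ K T : ℝ,
      σloc2 K T = σ ^ 2 + 2 * lam * σ * Real.sqrt T * Φ (d₂ K T) / φ (d₂ K T))
    (K : ℝ) (hK : 1 < K) :
    Tendsto (fun T : ℝ => σloc2 K T) (nhdsWithin 0 (Set.Ioi 0)) (nhds (σ ^ 2)) := by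
  have hL : Real.log (1 / K) < 0 := by
    rw [one_div, Real.log_inv]
    linarith [Real.log_pos hK]
  have hs : Tendsto (fun T : ℝ => 2 * lam * σ * Real.sqrt T) (nhdsWithin 0 (Set.Ioi 0))
      (nhds 0) := by
    have : Continuous (fun T : ℝ => 2 * lam * σ * Real.sqrt T) := by fun_prop
    have h := (this.tendsto 0).mono_left (nhdsWithin_le_nhds (s := Set.Ioi 0))
    simpa using h
  have hev : ∀ᶠ T in nhdsWithin (0 : ℝ) (Set.Ioi 0),
      Real.log (1 / K) + (lam - σ ^ 2 / 2) * T + σ * Real.sqrt T < 0 := by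
    have : Continuous (fun T : ℝ =>
        Real.log (1 / K) + (lam - σ ^ 2 / 2) * T + σ * Real.sqrt T) := by fun_prop
    have h := (this.tendsto 0).mono_left (nhdsWithin_le_nhds (s := Set.Ioi 0))
    exact h.eventually_lt_const (by simpa using hL)
  have hz : Tendsto (fun T : ℝ => 2 * lam * σ * Real.sqrt T * Φ (d₂ K T) / φ (d₂ K T))
      (nhdsWithin 0 (Set.Ioi 0)) (nhds 0) := by
    have hΦ0 : ∀ x, 0 ≤ Φ x := fun x => by
      rw [hΦ]
      exact MeasureTheory.integral_nonneg fun t => by dsimp; positivity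
    have hφ0 : ∀ x, 0 < φ x := fun x => by
      rw [hφ]
      have := Real.pi_pos
      positivity
    refine tendsto_of_tendsto_of_tendsto_of_le_of_le' tendsto_const_nhds hs
      (Eventually.of_forall fun T => ?_) ?_
    · have := hΦ0 (d₂ K T)
      have := hφ0 (d₂ K T)
      positivity
    · filter_upwards [hev, self_mem_nhdsWithin] with T h hT
      have hT' : 0 < Real.sqrt T := Real.sqrt_pos.2 hT
      have hd : d₂ K T ≤ -1 := by
        rw [hd₂, div_le_iff₀ (by positivity)]
        linarith
      rw [div_le_iff₀ (hφ0 _)]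
      have hle : Φ (d₂ K T) ≤ φ (d₂ K T) := by
        rw [hΦ, hφ]
        exact mills_bound _ hd
      gcongr
  have := hz.const_add (σ ^ 2)
  simp only [hσloc2]
  simpa using this
end

section
/- Fix σ > 0 and λ > 0, let Φ and φ denote the standard normal cumulative distribution function and density, and for K, T > 0 set d₂(K,T) := ( log(1/K) + (λ − σ²/2)T ) / (σ√T) and σ²_loc(K,T) := σ² + 2λσ√T · Φ(d₂(K,T)) / φ(d₂(K,T)). Then for every fixed K with 0 < K < 1, T · log( σ²_loc(K,T) ) → (log K)² / (2σ²) as T → 0⁺; in particular σ²_loc(K,T) blows up like exp(const/T) as T → 0⁺. -/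
open Filter

/-- Below the money (`0 < K < 1`), the jump-to-ruin local variance
`σ²_loc(K,T) = σ² + 2λσ√T·Φ(d₂(K,T))/φ(d₂(K,T))` blows up like `exp(const/T)`:
`T·log σ²_loc(K,T) → (log K)²/(2σ²)` as `T → 0⁺`. -/
theorem jump_to_ruin_local_vol_itm_blowup
    (σ lam : ℝ) (hσ : 0 < σ) (hlam : 0 < lam)
    (Φ φ : ℝ → ℝ)
    (hΦ : ∀ x : ℝ, Φ x = ∫ t in Set.Iic x, Real.exp (-t ^ 2 / 2) / Real.sqrt (2 * Real.pi))
    (hφ : ∀ x : ℝ, φ x = Real.exp (-x ^ 2 / 2) / Real.sqrt (2 * Real.pi))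
    (d₂ : ℝ → ℝ → ℝ)
    (hd₂ : ∀ K T : ℝ,
      d₂ K T = (Real.log (1 / K) + (lam - σ ^ 2 / 2) * T) / (σ * Real.sqrt T))
    (σloc2 : ℝ → ℝ → ℝ)
    (hσloc2 : ∀ K T : ℝ,
      σloc2 K T = σ ^ 2 + 2 * lam * σ * Real.sqrt T * Φ (d₂ K T) / φ (d₂ K T))
    (K : ℝ) (hK0 : 0 < K) (hK1 : K < 1) :
    Tendsto (fun T : ℝ => T * Real.log (σloc2 K T))
      (nhdsWithin 0 (Set.Ioi 0)) (nhds (Real.log K ^ 2 / (2 * σ ^ 2))) := by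
  set f : ℝ → ℝ := fun t => Real.exp (-t ^ 2 / 2) / Real.sqrt (2 * Real.pi) with hf
  have hs : 0 < Real.sqrt (2 * Real.pi) := Real.sqrt_pos.2 (by positivity)
  have hfpos : ∀ t, 0 < f t := fun t => div_pos (Real.exp_pos _) hs
  have hint : MeasureTheory.Integrable f := by
    have h := (integrable_exp_neg_mul_sq (b := 1 / 2) (by norm_num)).div_const
      (Real.sqrt (2 * Real.pi))
    refine h.congr (Filter.Eventually.of_forall fun t => ?_)
    simp only [hf]
    congr 2
    ring
  obtain ⟨B, hB⟩ : ∃ B, B = ∫ t, f t := ⟨_, rfl⟩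
  have hub : ∀ x, Φ x ≤ B := by
    intro x
    rw [hΦ, hB]
    exact MeasureTheory.setIntegral_le_integral hint
      (Filter.Eventually.of_forall fun t => (hfpos t).le)
  have hp : 0 < Φ 0 := by
    rw [hΦ]
    rw [MeasureTheory.setIntegral_pos_iff_support_of_nonneg_ae
      (Filter.Eventually.of_forall fun t => (hfpos t).le) hint.integrableOn]
    have : Function.support f = Set.univ := by
      ext t; simp [(hfpos t).ne']
    change 0 < MeasureTheory.volume (Function.support f ∩ Set.Iic 0)
    rw [this]
    simp
  have hlb : ∀ x, 0 ≤ x → Φ 0 ≤ Φ x := by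
    intro x hx
    rw [hΦ, hΦ]
    exact MeasureTheory.setIntegral_mono_set hint.integrableOn
      (Filter.Eventually.of_forall fun t => (hfpos t).le)
      (Set.Iic_subset_Iic.2 hx).eventuallyLE
  have hBpos : 0 < B := hp.trans_le (hub 0)
  obtain ⟨c, hc⟩ : ∃ c, c = 2 * lam * σ * Real.sqrt (2 * Real.pi) := ⟨_, rfl⟩
  have hcpos : 0 < c := by rw [hc]; positivity
  have hform : ∀ T, σloc2 K T
      = σ ^ 2 + c * Real.sqrt T * Φ (d₂ K T) * Real.exp (d₂ K T ^ 2 / 2) := by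
    intro T
    rw [hσloc2, hφ, neg_div, Real.exp_neg, hc]
    field_simp
  obtain ⟨m, hm⟩ : ∃ m, m = lam - σ ^ 2 / 2 := ⟨_, rfl⟩
  have hL : 0 < Real.log (1 / K) := Real.log_pos (by rw [lt_div_iff₀ hK0]; linarith)
  have hlogK : Real.log (1 / K) = - Real.log K := by simp
  have hev : ∀ᶠ T in nhdsWithin (0:ℝ) (Set.Ioi 0), 0 < Real.log (1 / K) + m * T := by
    have : Tendsto (fun T : ℝ => Real.log (1 / K) + m * T) (nhdsWithin 0 (Set.Ioi 0))
        (nhds (Real.log (1 / K) + m * 0)) :=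
      (Continuous.tendsto (by fun_prop) 0).mono_left nhdsWithin_le_nhds
    exact this.eventually (lt_mem_nhds (by simpa using hL))
  have hmain : Tendsto (fun T : ℝ => (Real.log (1 / K) + m * T) ^ 2 / (2 * σ ^ 2))
      (nhdsWithin 0 (Set.Ioi 0)) (nhds (Real.log K ^ 2 / (2 * σ ^ 2))) := by
    have : Tendsto (fun T : ℝ => (Real.log (1 / K) + m * T) ^ 2 / (2 * σ ^ 2))
        (nhdsWithin 0 (Set.Ioi 0)) (nhds ((Real.log (1 / K) + m * 0) ^ 2 / (2 * σ ^ 2))) :=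
      (Continuous.tendsto (by fun_prop) 0).mono_left nhdsWithin_le_nhds
    rw [hlogK] at this ⊢
    simpa using this
  have hid : Tendsto (fun T : ℝ => T) (nhdsWithin 0 (Set.Ioi 0)) (nhds 0) :=
    tendsto_id.mono_left nhdsWithin_le_nhds
  have hlow : Tendsto (fun T : ℝ => T * Real.log (c * Φ 0) + T * Real.log T / 2)
      (nhdsWithin 0 (Set.Ioi 0)) (nhds 0) := by
    have h1 : Tendsto (fun T : ℝ => T * Real.log T) (nhdsWithin 0 (Set.Ioi 0)) (nhds 0) := by
      have := (Real.continuous_mul_log.tendsto 0).mono_left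
        (nhdsWithin_le_nhds (s := Set.Ioi 0))
      simpa using this
    simpa using (hid.mul_const (Real.log (c * Φ 0))).add (h1.div_const 2)
  have hup : Tendsto (fun T : ℝ => T * Real.log (σ ^ 2 + c * Real.sqrt T * B))
      (nhdsWithin 0 (Set.Ioi 0)) (nhds 0) := by
    have h1 : Tendsto (fun T : ℝ => σ ^ 2 + c * Real.sqrt T * B)
        (nhdsWithin 0 (Set.Ioi 0)) (nhds (σ ^ 2 + c * Real.sqrt 0 * B)) :=
      (Continuous.tendsto (by fun_prop) 0).mono_left nhdsWithin_le_nhds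
    have h2 := h1.log (by simp; exact hσ.ne')
    simpa using hid.mul h2
  have hlow2 := hlow.add hmain
  have hup2 := hup.add hmain
  rw [zero_add] at hlow2 hup2
  have hd : ∀ T, 0 < T → T * (d₂ K T ^ 2 / 2)
      = (Real.log (1 / K) + m * T) ^ 2 / (2 * σ ^ 2) := by
    intro T hT
    rw [hd₂, ← hm, div_pow, mul_pow, Real.sq_sqrt hT.le]
    field_simp
  refine tendsto_of_tendsto_of_tendsto_of_le_of_le' hlow2 hup2 ?_ ?_
  · filter_upwards [hev, self_mem_nhdsWithin] with T h1 hT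
    have hT : 0 < T := hT
    have hsT : 0 < Real.sqrt T := Real.sqrt_pos.2 hT
    have hd0 : 0 ≤ d₂ K T := by
      rw [hd₂, ← hm]; positivity
    have hle : c * Φ 0 * Real.sqrt T * Real.exp (d₂ K T ^ 2 / 2) ≤ σloc2 K T := by
      rw [hform]
      have h3 : c * Φ 0 * Real.sqrt T * Real.exp (d₂ K T ^ 2 / 2)
          ≤ c * Real.sqrt T * Φ (d₂ K T) * Real.exp (d₂ K T ^ 2 / 2) := by
        rw [mul_right_comm c]
        have := hlb _ hd0
        gcongr
      have := sq_nonneg σ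
      linarith
    have h4 := Real.log_le_log (by positivity) hle
    rw [Real.log_mul (by positivity) (by positivity),
      Real.log_mul (by positivity) (by positivity), Real.log_exp, Real.log_sqrt hT.le] at h4
    have h5 := mul_le_mul_of_nonneg_left h4 hT.le
    have := hd T hT
    linarith
  · filter_upwards [hev, self_mem_nhdsWithin] with T h1 hT
    have hT : 0 < T := hT
    have hsT : 0 < Real.sqrt T := Real.sqrt_pos.2 hT
    have hd0 : 0 ≤ d₂ K T := by
      rw [hd₂, ← hm]; positivity
    have hPd : 0 < Φ (d₂ K T) := hp.trans_le (hlb _ hd0)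
    have hle : σloc2 K T
        ≤ (σ ^ 2 + c * Real.sqrt T * B) * Real.exp (d₂ K T ^ 2 / 2) := by
      rw [hform, add_mul]
      have h6 : 1 ≤ Real.exp (d₂ K T ^ 2 / 2) := Real.one_le_exp (by positivity)
      have := hub (d₂ K T)
      apply add_le_add
      · exact le_mul_of_one_le_right (sq_nonneg σ) h6
      · gcongr
    have h4 := Real.log_le_log (by rw [hform]; positivity) hle
    rw [Real.log_mul (by positivity) (by positivity), Real.log_exp] at h4
    have h5 := mul_le_mul_of_nonneg_left h4 hT.le
    have := hd T hT
    linarith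
end
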